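/- Let f : {0,1}^n → {0,1} be a symmetric boolean function (f(x) depends only on the Hamming weight |x|), and suppose f(x) = f(x+a) for all x ∈ {0,1}^n, for some a with 1 ≤ |a| ≤ n−1. Then: if |a| is odd, f is constant; if |a| is even, f is constant, or f is the PARITY function, or f is the negation of PARITY. -/

import Mathlib

/-!
The periods of `f` (the `v` with `f (x + v) = f x` for all `x`) form a subgroup of `(ZMod 2)^n`,
and for symmetric `f` this subgroup is stable under permuting coordinates. If `a` is a period and
`a i ≠ a j`, then adding to `a` its image under the transposition `(i j)` shows that `e_i + e_j`
is a period. Since `1 ≤ |a| ≤ n - 1`, both values occur among the coordinates of `a`, so there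
is an index `k` for which every `e_i + e_k` is a period (`single_add_single_mem_periods`). Modulo
these vectors each `x` equals `(∑ i, x i) • e_k`, hence `f x` is a function `g` of `|x| mod 2`
alone, and the four functions `ZMod 2 → ZMod 2` give the four cases. When `|a|` is odd,
`g 1 = f a = f 0 = g 0`, so `g` is constant.
-/

/-- The subgroup of periods of `f`: those `v` with `f (x + v) = f x` for every `x`. -/
def periods {n : ℕ} (f : (Fin n → ZMod 2) → ZMod 2) : AddSubgroup (Fin n → ZMod 2) where
  carrier := {v | ∀ x, f (x + v) = f x}
  zero_mem' := by simp
  add_mem' := by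
    intro v w hv hw x
    rw [← add_assoc, hw, hv]
  neg_mem' := by
    intro v hv x
    simpa using (hv (x + -v)).symm

theorem vec_add_self {n : ℕ} (x : Fin n → ZMod 2) : x + x = 0 :=
  funext fun i => CharTwo.add_self_eq_zero (x i)

theorem hammingNorm_comp_perm {n : ℕ} (x : Fin n → ZMod 2) (σ : Equiv.Perm (Fin n)) :
    hammingNorm (x ∘ σ) = hammingNorm x := by
  unfold hammingNorm
  exact Finset.card_equiv σ (by simp)

theorem hammingNorm_cast_eq_sum {n : ℕ} (x : Fin n → ZMod 2) :
    (hammingNorm x : ZMod 2) = ∑ i, x i := by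
  unfold hammingNorm
  rw [Finset.card_filter, Nat.cast_sum]
  refine Finset.sum_congr rfl fun i _ => ?_
  have hcases : ∀ t : ZMod 2, t = 0 ∨ t = 1 := by decide
  rcases hcases (x i) with hi | hi <;> simp [hi]

theorem comp_perm_mem_periods {n : ℕ} {f : (Fin n → ZMod 2) → ZMod 2}
    (hsym : ∀ x y : Fin n → ZMod 2, hammingNorm x = hammingNorm y → f x = f y)
    {a : Fin n → ZMod 2} (ha : a ∈ periods f) (σ : Equiv.Perm (Fin n)) :
    a ∘ σ ∈ periods f := by
  intro x
  have key : x + a ∘ σ = (x ∘ σ.symm + a) ∘ σ := by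
    ext i
    simp
  rw [key, hsym _ _ (hammingNorm_comp_perm _ σ), ha, hsym _ _ (hammingNorm_comp_perm x σ.symm)]

/-- A period `a` with `a i = 1` and `a j = 0` yields the period `e_i + e_j`, namely the sum of
`a` and its image under the transposition of `i` and `j`. -/
theorem single_add_single_mem_periods_of_ne {n : ℕ} {f : (Fin n → ZMod 2) → ZMod 2}
    (hsym : ∀ x y : Fin n → ZMod 2, hammingNorm x = hammingNorm y → f x = f y)
    {a : Fin n → ZMod 2} (ha : a ∈ periods f) {i j : Fin n} (hi : a i = 1) (hj : a j = 0) :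
    (Pi.single i 1 + Pi.single j 1 : Fin n → ZMod 2) ∈ periods f := by
  have hij : i ≠ j := by
    rintro rfl
    simp [hi] at hj
  have key : (Pi.single i 1 + Pi.single j 1 : Fin n → ZMod 2) = a + a ∘ Equiv.swap i j := by
    ext l
    by_cases hli : l = i
    · subst hli
      simp [hi, hj, hij]
    · by_cases hlj : l = j
      · subst hlj
        simp [hi, hj, hli]
      · simp [Equiv.swap_apply_of_ne_of_ne hli hlj, hli, hlj, CharTwo.add_self_eq_zero]
  rw [key]
  exact add_mem ha (comp_perm_mem_periods hsym ha _)

/-- With `a k = 0`, every `e_i + e_k` is a period: directly if `a i = 1`, and otherwise through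
an intermediate index `m` with `a m = 1`. -/
theorem single_add_single_mem_periods {n : ℕ} {f : (Fin n → ZMod 2) → ZMod 2}
    (hsym : ∀ x y : Fin n → ZMod 2, hammingNorm x = hammingNorm y → f x = f y)
    {a : Fin n → ZMod 2} (ha : a ∈ periods f) {m k : Fin n} (hm : a m = 1) (hk : a k = 0)
    (i : Fin n) : (Pi.single i 1 + Pi.single k 1 : Fin n → ZMod 2) ∈ periods f := by
  have hcases : ∀ t : ZMod 2, t = 0 ∨ t = 1 := by decide
  rcases hcases (a i) with hi | hi
  · have h := add_mem (single_add_single_mem_periods_of_ne hsym ha hm hi)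
      (single_add_single_mem_periods_of_ne hsym ha hm hk)
    rwa [add_add_add_comm, vec_add_self, zero_add] at h
  · exact single_add_single_mem_periods_of_ne hsym ha hi hk

theorem apply_eq_apply_single_sum {n : ℕ} {f : (Fin n → ZMod 2) → ZMod 2} {k : Fin n}
    (h : ∀ i, (Pi.single i 1 + Pi.single k 1 : Fin n → ZMod 2) ∈ periods f)
    (x : Fin n → ZMod 2) : f x = f (Pi.single k (∑ i, x i)) := by
  have hmem : ∑ i, (Pi.single i (x i) + Pi.single k (x i) : Fin n → ZMod 2) ∈ periods f := by
    refine sum_mem fun i _ => ?_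
    have hcases : ∀ t : ZMod 2, t = 0 ∨ t = 1 := by decide
    rcases hcases (x i) with hi | hi
    · simp [hi, zero_mem]
    · rw [hi]
      exact h i
  have hsum : ∑ i, (Pi.single i (x i) + Pi.single k (x i) : Fin n → ZMod 2)
      = x + Pi.single k (∑ i, x i) := by
    rw [Finset.sum_add_distrib, Finset.univ_sum_single]
    congr 1
    exact (map_sum (AddMonoidHom.single (fun _ : Fin n => ZMod 2) k) x Finset.univ).symm
  rw [hsum] at hmem
  have := hmem x
  rwa [← add_assoc, vec_add_self, zero_add, eq_comm] at this

/-- Let `f : {0,1}^n → {0,1}` be symmetric (depending only on the Hamming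
weight), and suppose `f(x) = f(x+a)` for all `x`, for some `a` with `1 ≤ |a| ≤ n − 1`.
Then: if `|a|` is odd, `f` is constant; if `|a|` is even, `f` is constant, PARITY, or the
negation of PARITY. -/
theorem symmetric_invariant_characterisation (n : ℕ)
    (f : (Fin n → ZMod 2) → ZMod 2)
    (hsym : ∀ x y : Fin n → ZMod 2, hammingNorm x = hammingNorm y → f x = f y)
    (a : Fin n → ZMod 2) (ha1 : 1 ≤ hammingNorm a) (ha2 : hammingNorm a ≤ n - 1)
    (hinv : ∀ x : Fin n → ZMod 2, f (x + a) = f x) :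
    (Odd (hammingNorm a) → ∃ c : ZMod 2, ∀ x, f x = c) ∧
    (Even (hammingNorm a) →
      (∃ c : ZMod 2, ∀ x, f x = c) ∨
      (∀ x, f x = (hammingNorm x : ZMod 2)) ∨
      (∀ x, f x = (hammingNorm x : ZMod 2) + 1)) := by
  have hcases : ∀ t : ZMod 2, t = 0 ∨ t = 1 := by decide
  have ha : a ∈ periods f := hinv
  obtain ⟨m, hm⟩ : ∃ m, a m = 1 := by
    by_contra! hne
    have h0 : a = 0 := funext fun i => (hcases (a i)).resolve_right (hne i)
    simp [h0] at ha1
  obtain ⟨k, hk⟩ : ∃ k, a k = 0 := by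
    by_contra! hne
    have hn : hammingNorm a = n := by simp [hammingNorm, hne]
    omega
  obtain ⟨g, hg⟩ : ∃ g : ZMod 2 → ZMod 2, ∀ x, f x = g (hammingNorm x : ZMod 2) := by
    refine ⟨fun s => f (Pi.single k s), fun x => ?_⟩
    rw [hammingNorm_cast_eq_sum]
    exact apply_eq_apply_single_sum (single_add_single_mem_periods hsym ha hm hk) x
  constructor
  · intro hodd
    have h01 : g 1 = g 0 := by
      have h := hinv 0
      rw [zero_add, hg, hg 0, ZMod.natCast_eq_one_iff_odd.mpr hodd] at h
      simpa using h
    refine ⟨g 0, fun x => ?_⟩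
    rw [hg]
    rcases hcases (hammingNorm x : ZMod 2) with h | h <;> simp [h, h01]
  · intro _
    have hclass : ∀ g : ZMod 2 → ZMod 2,
        (∃ c, ∀ t, g t = c) ∨ (∀ t, g t = t) ∨ (∀ t, g t = t + 1) := by decide
    rcases hclass g with ⟨c, h⟩ | h | h
    · exact Or.inl ⟨c, fun x => by rw [hg, h]⟩
    · exact Or.inr (Or.inl fun x => by rw [hg, h])
    · exact Or.inr (Or.inr fun x => by rw [hg, h])
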